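/- In a weakly idempotent complete additive category, the stable exact sequences form an exact structure (in the sense of Quillen–Keller). -/

import Mathlib

/-!
Everything rests on a cancellation property: if `i ≫ g` is a semi-stable kernel, then so is `i`.
Shears turn `i ≫ g : A ⟶ X` into the semi-stable kernel `(i, 0) : A ⟶ B ⊞ X`. In the pushout `P`
of `(i, 0)` along any `h`, the summand `X` stays a retract, and by weak idempotent completeness it
has a complement in `P`; this complement is the pushout of `i` along `h`.

Pulling a stable exact sequence `(i, d)` back gives a kernel `i'` with `i' ≫ g = i`, so cancellation
applies to `i'`. For a composite `d ≫ d'`, let `k` be the kernel of `d ≫ d'` and `p` the pullback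
of `d` along `i' = ker d'`. Then `(k, p)` is a pushout of `i`, and
`k ≫ (1, d) = (k, p) ≫ (1 ⊞ i')` is a semi-stable kernel, so cancellation applies to `k`.
The axiom on pushouts is dual to the one on pullbacks.
-/

open CategoryTheory CategoryTheory.Limits ZeroObject

universe v u

variable {𝒞 : Type u} [Category.{v} 𝒞] [Preadditive 𝒞] [HasZeroObject 𝒞] [HasBinaryBiproducts 𝒞]

/-- `d` is a cokernel of some morphism. -/
def IsCokernelOfSome {B X : 𝒞} (d : B ⟶ X) : Prop :=
  ∃ (A : 𝒞) (f : A ⟶ B) (w : f ≫ d = 0), Nonempty (IsColimit (CokernelCofork.ofπ d w))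

/-- `i` is a kernel of some morphism. -/
def IsKernelOfSome {A B : 𝒞} (i : A ⟶ B) : Prop :=
  ∃ (X : 𝒞) (f : B ⟶ X) (w : i ≫ f = 0), Nonempty (IsLimit (KernelFork.ofι i w))

/-- A semi-stable cokernel: a cokernel whose pullback along every morphism exists
and is again a cokernel. -/
def IsSemiStableCokernel {B X : 𝒞} (d : B ⟶ X) : Prop :=
  IsCokernelOfSome d ∧ ∀ (C' : 𝒞) (h : C' ⟶ X), ∃ (B' : 𝒞) (g : B' ⟶ B) (d' : B' ⟶ C'),
    IsPullback g d' d h ∧ IsCokernelOfSome d'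

/-- A semi-stable kernel: a kernel whose pushout along every morphism exists
and is again a kernel. -/
def IsSemiStableKernel {A B : 𝒞} (i : A ⟶ B) : Prop :=
  IsKernelOfSome i ∧ ∀ (A' : 𝒞) (h : A ⟶ A'), ∃ (P : 𝒞) (g : B ⟶ P) (i' : A' ⟶ P),
    IsPushout i h g i' ∧ IsKernelOfSome i'

/-- A stable exact sequence: a kernel-cokernel pair with semi-stable kernel and
semi-stable cokernel. -/
def IsStableExact {A B X : 𝒞} (i : A ⟶ B) (d : B ⟶ X) : Prop :=
  (∃ w : i ≫ d = 0, Nonempty (IsLimit (KernelFork.ofι i w)) ∧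
      Nonempty (IsColimit (CokernelCofork.ofπ d w))) ∧
    IsSemiStableKernel i ∧ IsSemiStableCokernel d

/-- An exact structure in the sense of Quillen--Keller: a class of kernel-cokernel
pairs (conflations) satisfying the axioms [E0], [E1], [E2], [E2op]. -/
structure IsExactStructure
    (E : ∀ ⦃A B X : 𝒞⦄, (A ⟶ B) → (B ⟶ X) → Prop) : Prop where
  ker_coker : ∀ ⦃A B X : 𝒞⦄ (i : A ⟶ B) (d : B ⟶ X), E i d →
    ∃ w : i ≫ d = 0, Nonempty (IsLimit (KernelFork.ofι i w)) ∧
      Nonempty (IsColimit (CokernelCofork.ofπ d w))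
  E0 : ∃ (A : 𝒞) (i : A ⟶ (0 : 𝒞)), E i (𝟙 (0 : 𝒞))
  E1 : ∀ ⦃A B X A' Y : 𝒞⦄ (i : A ⟶ B) (d : B ⟶ X) (i' : A' ⟶ X) (d' : X ⟶ Y),
    E i d → E i' d' → ∃ (A2 : 𝒞) (i2 : A2 ⟶ B), E i2 (d ≫ d')
  E2 : ∀ ⦃A B X X' : 𝒞⦄ (i : A ⟶ B) (d : B ⟶ X), E i d → ∀ (h : X' ⟶ X),
    ∃ (B' : 𝒞) (g : B' ⟶ B) (d' : B' ⟶ X') (_ : IsPullback g d' d h)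
      (A' : 𝒞) (i' : A' ⟶ B'), E i' d'
  E2op : ∀ ⦃A B X A' : 𝒞⦄ (i : A ⟶ B) (d : B ⟶ X), E i d → ∀ (h : A ⟶ A'),
    ∃ (P : 𝒞) (g : B ⟶ P) (i' : A' ⟶ P) (_ : IsPushout i h g i')
      (Y : 𝒞) (d' : P ⟶ Y), E i' d'

/-- The morphism `i` is a kernel of `f`. A proposition rather than a chosen limit, so that it can be
transported along the duality with `IsCokernel` by equivalences. -/
def IsKernel {C : Type*} [Category* C] [HasZeroMorphisms C] {A B X : C}
    (i : A ⟶ B) (f : B ⟶ X) : Prop :=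
  ∃ w : i ≫ f = 0, Nonempty (IsLimit (KernelFork.ofι i w))

/-- The morphism `d` is a cokernel of `f`: the dual of `IsKernel`. -/
def IsCokernel {C : Type*} [Category* C] [HasZeroMorphisms C] {A B X : C}
    (f : A ⟶ B) (d : B ⟶ X) : Prop :=
  ∃ w : f ≫ d = 0, Nonempty (IsColimit (CokernelCofork.ofπ d w))

/-- Weak idempotent completeness: every retraction has a kernel. In a preadditive
category the kernel is a complement of the retract. -/
def IsWeaklyIdempotentComplete (C : Type*) [Category* C] [HasZeroMorphisms C] : Prop :=
  ∀ ⦃X Y : C⦄ (r : X ⟶ Y) (s : Y ⟶ X), s ≫ r = 𝟙 Y → ∃ (K : C) (k : K ⟶ X), IsKernel k r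

section HasZeroMorphisms

variable {C : Type*} [Category* C] [HasZeroMorphisms C]

namespace IsKernel

variable {A B X : C} {i : A ⟶ B} {f : B ⟶ X}

lemma comp_eq_zero (h : IsKernel i f) : i ≫ f = 0 :=
  h.fst

lemma mono (h : IsKernel i f) : Mono i :=
  let ⟨_, ⟨hl⟩⟩ := h
  mono_of_isLimit_fork hl

lemma exists_lift (h : IsKernel i f) {Z : C} (t : Z ⟶ B) (ht : t ≫ f = 0) :
    ∃ l : Z ⟶ A, l ≫ i = t :=
  let ⟨_, ⟨hl⟩⟩ := h
  let ⟨l, hl⟩ := KernelFork.IsLimit.lift' hl t ht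
  ⟨l, hl⟩

lemma of_exists_lift [Mono i] (w : i ≫ f = 0)
    (h : ∀ ⦃Z : C⦄ (t : Z ⟶ B), t ≫ f = 0 → ∃ l : Z ⟶ A, l ≫ i = t) : IsKernel i f :=
  ⟨w, ⟨KernelFork.IsLimit.ofι' i w fun t ht => ⟨(h t ht).choose, (h t ht).choose_spec⟩⟩⟩

end IsKernel

lemma isKernel_op_iff {A B X : C} {f : A ⟶ B} {d : B ⟶ X} :
    IsKernel d.op f.op ↔ IsCokernel f d :=
  ⟨fun ⟨w, ⟨h⟩⟩ => ⟨Quiver.Hom.op_inj w, ⟨KernelFork.IsLimit.ofιUnop d.op w h⟩⟩,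
    fun ⟨w, ⟨h⟩⟩ => ⟨_, ⟨CokernelCofork.IsColimit.ofπOp d w h⟩⟩⟩

lemma isCokernel_op_iff {A B X : C} {i : A ⟶ B} {f : B ⟶ X} :
    IsCokernel f.op i.op ↔ IsKernel i f :=
  ⟨fun ⟨w, ⟨h⟩⟩ => ⟨Quiver.Hom.op_inj w, ⟨CokernelCofork.IsColimit.ofπUnop i.op w h⟩⟩,
    fun ⟨w, ⟨h⟩⟩ => ⟨_, ⟨KernelFork.IsLimit.ofιOp i w h⟩⟩⟩

namespace IsCokernel

variable {A B X : C} {f : A ⟶ B} {d : B ⟶ X}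

lemma comp_eq_zero (h : IsCokernel f d) : f ≫ d = 0 :=
  h.fst

lemma epi (h : IsCokernel f d) : Epi d :=
  let ⟨_, ⟨hl⟩⟩ := h
  epi_of_isColimit_cofork hl

lemma exists_desc (h : IsCokernel f d) {Z : C} (t : B ⟶ Z) (ht : f ≫ t = 0) :
    ∃ l : X ⟶ Z, d ≫ l = t :=
  let ⟨_, ⟨hl⟩⟩ := h
  let ⟨l, hl⟩ := CokernelCofork.IsColimit.desc' hl t ht
  ⟨l, hl⟩

lemma of_exists_desc [Epi d] (w : f ≫ d = 0)
    (h : ∀ ⦃Z : C⦄ (t : B ⟶ Z), f ≫ t = 0 → ∃ l : X ⟶ Z, d ≫ l = t) : IsCokernel f d :=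
  ⟨w, ⟨CokernelCofork.IsColimit.ofπ' d w fun t ht => ⟨(h t ht).choose, (h t ht).choose_spec⟩⟩⟩

end IsCokernel

lemma isKernel_iff_isPullback {A B X Z : C} {i : A ⟶ B} {f : B ⟶ X} (hZ : IsZero Z) :
    IsKernel i f ↔ IsPullback i (0 : A ⟶ Z) f 0 := by
  refine ⟨fun h => ?_, fun h => ?_⟩
  · have := h.mono
    choose l hl using fun s : PullbackCone f (0 : Z ⟶ X) =>
      h.exists_lift s.fst (by simp [s.condition])
    exact ⟨⟨by simp [h.comp_eq_zero]⟩, ⟨PullbackCone.IsLimit.mk _ l hl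
      (fun _ => hZ.eq_of_tgt _ _) fun s m hm _ => by rw [← cancel_mono i, hm, hl]⟩⟩
  · have : Mono i := ⟨fun _ _ hab => h.hom_ext hab (hZ.eq_of_tgt _ _)⟩
    exact .of_exists_lift (by simpa using h.w) fun _ t ht =>
      ⟨h.lift t 0 (by simpa using ht), by simp⟩

lemma isCokernel_iff_isPushout {A B X Z : C} {f : A ⟶ B} {d : B ⟶ X} (hZ : IsZero Z) :
    IsCokernel f d ↔ IsPushout f (0 : A ⟶ Z) d 0 := by
  rw [← isKernel_op_iff, isKernel_iff_isPullback hZ.op]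
  exact ⟨fun h => h.unop.flip, fun h => h.flip.op⟩

section HasZeroObject

variable [HasZeroObject C]

namespace IsKernel

lemma comp_of_isPullback {A B D X Y : C} {i : A ⟶ B} {q : B ⟶ X} {j : B ⟶ D} {f : D ⟶ Y}
    {k : X ⟶ Y} (hi : IsKernel i q) (hp : IsPullback j q f k) : IsKernel (i ≫ j) f := by
  rw [isKernel_iff_isPullback (isZero_zero C)] at hi ⊢
  simpa using hi.paste_horiz hp

lemma fst_of_isPullback {K B A X Y : C} {k : K ⟶ B} {p : K ⟶ A} {d : B ⟶ X} {i : A ⟶ X}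
    {d' : X ⟶ Y} (hi : IsKernel i d') (hp : IsPullback k p d i) : IsKernel k (d ≫ d') := by
  rw [isKernel_iff_isPullback (isZero_zero C)] at hi ⊢
  simpa using hp.paste_vert hi

lemma exists_of_isPullback {A B X B' X' : C} {i : A ⟶ B} {d : B ⟶ X} {h : X' ⟶ X} {g : B' ⟶ B}
    {d' : B' ⟶ X'} (hi : IsKernel i d) (hp : IsPullback g d' d h) :
    ∃ i' : A ⟶ B', i' ≫ g = i ∧ IsKernel i' d' := by
  simp only [isKernel_iff_isPullback (isZero_zero C)] at hi ⊢
  have hi' : IsPullback i (0 : A ⟶ 0) d (0 ≫ h) := by simpa using hi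
  exact ⟨_, hp.lift_fst _ _ _, hi'.of_right' hp⟩

end IsKernel

lemma IsCokernel.isPushout_of_comp {A B X P Y : C} {f : A ⟶ B} {d : B ⟶ X} {g : B ⟶ P} {p : P ⟶ Y}
    {g' : X ⟶ Y} (hd : IsCokernel f d) (hp : IsCokernel (f ≫ g) p) (w : d ≫ g' = g ≫ p) :
    IsPushout d g g' p := by
  rw [isCokernel_iff_isPushout (isZero_zero C)] at hd hp
  exact (IsPushout.of_left (by simpa using hp) w.symm hd).flip

end HasZeroObject

end HasZeroMorphisms

section Preadditive

variable {C : Type*} [Category* C] [Preadditive C]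

section Duality

variable {A B X : C}

lemma isKernelOfSome_op_iff {d : B ⟶ X} : IsKernelOfSome d.op ↔ IsCokernelOfSome d :=
  ⟨fun ⟨Y, f, h⟩ => ⟨Y.unop, f.unop, isKernel_op_iff.1 h⟩,
    fun ⟨_, f, h⟩ => ⟨_, f.op, isKernel_op_iff.2 h⟩⟩

lemma isCokernelOfSome_op_iff {i : A ⟶ B} : IsCokernelOfSome i.op ↔ IsKernelOfSome i :=
  ⟨fun ⟨Y, f, h⟩ => ⟨Y.unop, f.unop, isCokernel_op_iff.1 h⟩,
    fun ⟨_, f, h⟩ => ⟨_, f.op, isCokernel_op_iff.2 h⟩⟩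

lemma isSemiStableKernel_op_iff {d : B ⟶ X} :
    IsSemiStableKernel d.op ↔ IsSemiStableCokernel d := by
  refine and_congr isKernelOfSome_op_iff ⟨fun H _ h => ?_, fun H _ h => ?_⟩
  · obtain ⟨_, g, d', hp, hd'⟩ := H _ h.op
    exact ⟨_, g.unop, d'.unop, hp.unop.flip, isKernelOfSome_op_iff.1 hd'⟩
  · obtain ⟨_, g, d', hp, hd'⟩ := H _ h.unop
    exact ⟨_, g.op, d'.op, hp.op.flip, isKernelOfSome_op_iff.2 hd'⟩

lemma isSemiStableCokernel_op_iff {i : A ⟶ B} :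
    IsSemiStableCokernel i.op ↔ IsSemiStableKernel i := by
  refine and_congr isCokernelOfSome_op_iff ⟨fun H _ h => ?_, fun H _ h => ?_⟩
  · obtain ⟨_, g, i', hp, hi'⟩ := H _ h.op
    exact ⟨_, g.unop, i'.unop, hp.unop.flip, isCokernelOfSome_op_iff.1 hi'⟩
  · obtain ⟨_, g, i', hp, hi'⟩ := H _ h.unop
    exact ⟨_, g.op, i'.op, hp.op.flip, isCokernelOfSome_op_iff.2 hi'⟩

end Duality

lemma IsCokernel.isKernel {A B X : C} {i : A ⟶ B} {d : B ⟶ X} (hd : IsCokernel i d)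
    (hi : IsKernelOfSome i) : IsKernel i d := by
  obtain ⟨Y, f, hf : IsKernel i f⟩ := hi
  have := hf.mono
  refine .of_exists_lift hd.comp_eq_zero fun Z t ht => hf.exists_lift t ?_
  obtain ⟨l, rfl⟩ := hd.exists_desc f hf.comp_eq_zero
  rw [reassoc_of% ht, zero_comp]

lemma IsKernel.isCokernel {A B X : C} {i : A ⟶ B} {d : B ⟶ X} (hi : IsKernel i d)
    (hd : IsCokernelOfSome d) : IsCokernel i d :=
  isKernel_op_iff.1 ((isCokernel_op_iff.2 hi).isKernel (isKernelOfSome_op_iff.2 hd))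

lemma IsKernelOfSome.of_comp {A B D : C} {i : A ⟶ B} {e : B ⟶ D} [Mono e]
    (h : IsKernelOfSome (i ≫ e)) : IsKernelOfSome i := by
  obtain ⟨X, f, hf : IsKernel (i ≫ e) f⟩ := h
  have := hf.mono
  have : Mono i := mono_of_mono i e
  refine ⟨X, e ≫ f, IsKernel.of_exists_lift (by simpa using hf.comp_eq_zero) fun Z t ht => ?_⟩
  obtain ⟨l, hl⟩ := hf.exists_lift (t ≫ e) (by simpa using ht)
  exact ⟨l, by simpa [← cancel_mono e] using hl⟩

lemma IsKernelOfSome.isPullback_of_isPushout {A B A' P : C} {i : A ⟶ B} {h : A ⟶ A'} {g : B ⟶ P}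
    {i' : A' ⟶ P} [Mono i'] (hi : IsKernelOfSome i) (hp : IsPushout i h g i') :
    IsPullback i h g i' := by
  obtain ⟨X, f, hf : IsKernel i f⟩ := hi
  have := hf.mono
  have hdesc : i ≫ f = h ≫ 0 := by simp [hf.comp_eq_zero]
  choose l hl using fun s : PullbackCone g i' => hf.exists_lift s.fst <|
    calc s.fst ≫ f = (s.fst ≫ g) ≫ hp.desc f 0 hdesc := by simp
      _ = (s.snd ≫ i') ≫ hp.desc f 0 hdesc := by rw [s.condition]
      _ = 0 := by simp
  refine ⟨⟨hp.w⟩, ⟨PullbackCone.IsLimit.mk _ l hl (fun s => ?_) fun s m hm _ => ?_⟩⟩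
  · rw [← cancel_mono i', Category.assoc, ← hp.w, reassoc_of% hl s, s.condition]
  · rw [← cancel_mono i, hm, hl]

lemma IsCokernel.isPushout_inl_lift {A K B X : C} [HasBinaryBiproduct B X] {a : A ⟶ K} {p : K ⟶ X}
    (hp : IsCokernel a p) (g : K ⟶ B) :
    IsPushout (a ≫ g) a biprod.inl (biprod.lift g p) := by
  have := hp.epi
  choose l hl using fun s : PushoutCocone (a ≫ g) a =>
    hp.exists_desc (s.inr - g ≫ s.inl) (by simp [← s.condition])
  refine ⟨⟨by ext <;> simp [hp.comp_eq_zero]⟩, ⟨PushoutCocone.IsColimit.mk _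
    (fun s => biprod.desc s.inl (l s)) (by simp) (fun s => by simp [hl]) fun s m hinl hlift => ?_⟩⟩
  ext
  · simp [hinl]
  · rw [biprod.inr_desc, ← cancel_epi p, hl, ← hinl, ← hlift]
    simp [biprod.lift_eq]

namespace IsWeaklyIdempotentComplete

lemma exists_complement (wic : IsWeaklyIdempotentComplete C) {X Y : C} {r : X ⟶ Y} {s : Y ⟶ X}
    (hsr : s ≫ r = 𝟙 Y) :
    ∃ (K : C) (ι : K ⟶ X) (p : X ⟶ K),
      IsKernel ι r ∧ IsCokernel s p ∧ p ≫ ι + r ≫ s = 𝟙 X := by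
  obtain ⟨K, ι, hι⟩ := wic r s hsr
  have := hι.mono
  obtain ⟨p, hp⟩ := hι.exists_lift (𝟙 X - r ≫ s) (by simp [hsr])
  have hιp : ι ≫ p = 𝟙 K := by
    simp [← cancel_mono ι, hp, reassoc_of% hι.comp_eq_zero]
  have : Epi p := (SplitEpi.mk ι hιp).epi
  have hsp : s ≫ p = 0 := by
    simp [← cancel_mono ι, hp, reassoc_of% hsr]
  exact ⟨K, ι, p, hι, .of_exists_desc hsp fun Z t ht => ⟨ι ≫ t, by simp [reassoc_of% hp, ht]⟩,
    by simp [hp]⟩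

lemma op (wic : IsWeaklyIdempotentComplete C) : IsWeaklyIdempotentComplete Cᵒᵖ := by
  intro X Y r s hsr
  obtain ⟨K, _, p, -, hp, -⟩ := wic.exists_complement (r := s.unop) (s := r.unop)
    (by rw [← unop_comp, hsr, unop_id])
  exact ⟨_, p.op, isKernel_op_iff.2 hp⟩

end IsWeaklyIdempotentComplete

lemma isStableExact_iff {A B X : C} {i : A ⟶ B} {d : B ⟶ X} :
    IsStableExact i d ↔
      (IsKernel i d ∧ IsCokernel i d) ∧ IsSemiStableKernel i ∧ IsSemiStableCokernel d :=
  and_congr_left fun _ =>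
    ⟨fun ⟨w, hi, hd⟩ => ⟨⟨w, hi⟩, ⟨w, hd⟩⟩, fun ⟨⟨w, hi⟩, ⟨_, hd⟩⟩ => ⟨w, hi, hd⟩⟩

namespace IsStableExact

variable {A B X : C} {i : A ⟶ B} {d : B ⟶ X}

lemma isKernel (h : IsStableExact i d) : IsKernel i d :=
  (isStableExact_iff.1 h).1.1

lemma isCokernel (h : IsStableExact i d) : IsCokernel i d :=
  (isStableExact_iff.1 h).1.2

lemma of_isKernel (h : IsKernel i d) (hi : IsSemiStableKernel i) (hd : IsSemiStableCokernel d) :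
    IsStableExact i d :=
  isStableExact_iff.2 ⟨⟨h, h.isCokernel hd.1⟩, hi, hd⟩

end IsStableExact

lemma isStableExact_op_iff {A B X : C} {i : A ⟶ B} {d : B ⟶ X} :
    IsStableExact d.op i.op ↔ IsStableExact i d := by
  rw [isStableExact_iff, isStableExact_iff, isKernel_op_iff, isCokernel_op_iff,
    isSemiStableKernel_op_iff, isSemiStableCokernel_op_iff, and_comm (a := IsCokernel i d),
    and_comm (a := IsSemiStableCokernel d)]

lemma IsSemiStableKernel.of_isPushout {A B A' P : C} {i : A ⟶ B} {h : A ⟶ A'} {g : B ⟶ P}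
    {i' : A' ⟶ P} (hi : IsSemiStableKernel i) (hp : IsPushout i h g i') :
    IsSemiStableKernel i' := by
  refine ⟨?_, fun A₂ h₂ => ?_⟩
  · obtain ⟨P', g', k, hp', hk⟩ := hi.2 _ h
    have hik : i' ≫ (hp.isoIsPushout _ _ hp').hom = k := by simp
    exact .of_comp (hik ▸ hk)
  · obtain ⟨P₂, g₂, i₂, hp₂, hi₂⟩ := hi.2 _ (h ≫ h₂)
    exact ⟨P₂, _, i₂, hp₂.of_top' hp, hi₂⟩

lemma IsSemiStableCokernel.of_isPullback {B X B' X' : C} {d : B ⟶ X} {h : X' ⟶ X} {g : B' ⟶ B}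
    {d' : B' ⟶ X'} (hd : IsSemiStableCokernel d) (hp : IsPullback g d' d h) :
    IsSemiStableCokernel d' :=
  isSemiStableKernel_op_iff.1 ((isSemiStableKernel_op_iff.2 hd).of_isPushout hp.op.flip)

lemma IsSemiStableKernel.comp_isIso {A B D : C} {i : A ⟶ B} (hi : IsSemiStableKernel i)
    (e : B ⟶ D) [IsIso e] : IsSemiStableKernel (i ≫ e) :=
  hi.of_isPushout (h := 𝟙 A) (g := e) (.of_vert_isIso ⟨by simp⟩)

section HasZeroObject

variable [HasZeroObject C]

namespace IsSemiStableKernel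

lemma exists_isCokernel {A B : C} {i : A ⟶ B} (hi : IsSemiStableKernel i) :
    ∃ (Q : C) (q : B ⟶ Q), IsCokernel i q := by
  obtain ⟨Q, q, z, hq, -⟩ := hi.2 0 0
  obtain rfl : z = 0 := (isZero_zero C).eq_of_src _ _
  exact ⟨Q, q, (isCokernel_iff_isPushout (isZero_zero C)).2 hq⟩

lemma isKernelOfSome_comp {A B D : C} {i : A ⟶ B} {j : B ⟶ D} (hi : IsSemiStableKernel i)
    (hj : IsSemiStableKernel j) : IsKernelOfSome (i ≫ j) := by
  obtain ⟨Q, q, hq⟩ := hi.exists_isCokernel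
  obtain ⟨R, f, k, hR, _, _, hk⟩ := hj.2 _ q
  have := IsKernel.mono hk
  exact ⟨R, f, (hq.isKernel hi.1).comp_of_isPullback (hj.1.isPullback_of_isPushout hR)⟩

lemma comp {A B D : C} {i : A ⟶ B} {j : B ⟶ D} (hi : IsSemiStableKernel i)
    (hj : IsSemiStableKernel j) : IsSemiStableKernel (i ≫ j) := by
  refine ⟨hi.isKernelOfSome_comp hj, fun A' h => ?_⟩
  obtain ⟨P, g, i', hP, -⟩ := hi.2 _ h
  obtain ⟨R, f, j', hR, -⟩ := hj.2 _ g
  exact ⟨R, f, i' ≫ j', hP.paste_horiz hR,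
    (hi.of_isPushout hP).isKernelOfSome_comp (hj.of_isPushout hR)⟩

end IsSemiStableKernel

lemma IsSemiStableCokernel.comp {B X Y : C} {d : B ⟶ X} {d' : X ⟶ Y} (hd : IsSemiStableCokernel d)
    (hd' : IsSemiStableCokernel d') : IsSemiStableCokernel (d ≫ d') :=
  isSemiStableKernel_op_iff.1 <|
    (isSemiStableKernel_op_iff.2 hd').comp (isSemiStableKernel_op_iff.2 hd)

variable [HasBinaryBiproducts C]

lemma isSemiStableKernel_zero (B : C) : IsSemiStableKernel (0 : 0 ⟶ B) := by
  have hinl (A : C) : IsKernel (biprod.inl : A ⟶ A ⊞ B) biprod.snd :=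
    (isKernel_iff_isPullback (isZero_zero C)).2 (.inl_snd A B)
  have hzero : IsKernel (0 : 0 ⟶ B) (𝟙 B) :=
    (isKernel_iff_isPullback (isZero_zero C)).2 (by simp)
  refine ⟨⟨_, _, hzero⟩, fun A h => ⟨A ⊞ B, biprod.inr, biprod.inl, ?_, _, _, hinl A⟩⟩
  obtain rfl : h = 0 := (isZero_zero C).eq_of_src _ _
  exact (IsPushout.of_has_biproduct A B).flip

lemma isSemiStableKernel_id (A : C) : IsSemiStableKernel (𝟙 A) :=
  (isSemiStableKernel_zero 0).of_isPushout (IsPushout.zero_left A).flip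

lemma isSemiStableCokernel_id (A : C) : IsSemiStableCokernel (𝟙 A) :=
  isSemiStableKernel_op_iff.1 (isSemiStableKernel_id (Opposite.op A))

lemma isSemiStableKernel_inr (A B : C) : IsSemiStableKernel (biprod.inr : A ⟶ B ⊞ A) :=
  (isSemiStableKernel_zero B).of_isPushout (IsPushout.of_has_biproduct B A)

lemma isStableExact_id_zero : IsStableExact (𝟙 (0 : C)) (𝟙 0) :=
  .of_isKernel
    (.of_exists_lift ((isZero_zero C).eq_of_src _ _) fun _ t _ => ⟨t, Category.comp_id t⟩)
    (isSemiStableKernel_id 0) (isSemiStableCokernel_id 0)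

namespace IsSemiStableKernel

lemma biprod_map_id {A A' : C} {i : A ⟶ A'} (hi : IsSemiStableKernel i) (B : C) :
    IsSemiStableKernel (biprod.map (𝟙 B) i) :=
  hi.of_isPushout <| IsPushout.of_left (h₁₁ := (0 : 0 ⟶ A))
    (by simpa using (IsPushout.of_has_biproduct B A').flip) (by simp)
    (IsPushout.of_has_biproduct B A).flip

lemma comp_inl_of_comp {A B X : C} {i : A ⟶ B} {g : B ⟶ X} (h : IsSemiStableKernel (i ≫ g)) :
    IsSemiStableKernel (i ≫ (biprod.inl : B ⟶ B ⊞ X)) := by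
  have hlift : IsSemiStableKernel (biprod.lift i (𝟙 A)) := by
    convert (isSemiStableKernel_inr A B).comp_isIso (Biprod.unipotentLower i).hom using 1
    ext <;> simp
  convert (hlift.comp (h.biprod_map_id B)).comp_isIso (Biprod.unipotentUpper (-g)).hom using 1
  ext <;> simp

lemma of_comp_inl (wic : IsWeaklyIdempotentComplete C) {A B X : C} {i : A ⟶ B}
    (hi : IsSemiStableKernel (i ≫ (biprod.inl : B ⟶ B ⊞ X))) : IsSemiStableKernel i := by
  refine ⟨hi.1.of_comp, fun A' h => ?_⟩
  obtain ⟨P, G, k, hP, hk⟩ := hi.2 A' h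
  let ρ : P ⟶ X := hP.desc biprod.snd 0 (by simp)
  have hGρ : G ≫ ρ = biprod.snd := hP.inl_desc _ _ _
  have hkρ : k ≫ ρ = 0 := hP.inr_desc _ _ _
  obtain ⟨P', ι, p, hι, hp, hsum⟩ := wic.exists_complement (r := ρ) (s := biprod.inr ≫ G)
    (by simp [hGρ])
  have := hι.mono
  have hkι : (k ≫ p) ≫ ι = k := by
    simpa [reassoc_of% hkρ] using k ≫= hsum
  have hfst : IsCokernel (biprod.inr : X ⟶ B ⊞ X) biprod.fst :=
    (isCokernel_iff_isPushout (isZero_zero C)).2 (.inr_fst B X)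
  obtain ⟨g, hg⟩ := hfst.exists_desc (G ≫ p) (by simpa using hp.comp_eq_zero)
  refine ⟨P', g, k ≫ p, ?_, .of_comp (hkι.symm ▸ hk)⟩
  simpa using hP.paste_horiz (hfst.isPushout_of_comp hp hg)

lemma of_comp (wic : IsWeaklyIdempotentComplete C) {A B X : C} {i : A ⟶ B} {g : B ⟶ X}
    (h : IsSemiStableKernel (i ≫ g)) : IsSemiStableKernel i :=
  of_comp_inl wic h.comp_inl_of_comp

end IsSemiStableKernel

namespace IsStableExact

lemma exists_isPullback (wic : IsWeaklyIdempotentComplete C) {A B X X' : C} {i : A ⟶ B}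
    {d : B ⟶ X} (H : IsStableExact i d) (h : X' ⟶ X) :
    ∃ (B' : C) (g : B' ⟶ B) (d' : B' ⟶ X') (i' : A ⟶ B'),
      IsPullback g d' d h ∧ i' ≫ g = i ∧ IsStableExact i' d' := by
  have ⟨_, hi, hd⟩ := H
  obtain ⟨B', g, d', hp, -⟩ := hd.2 _ h
  obtain ⟨i', rfl, hi'⟩ := H.isKernel.exists_of_isPullback hp
  exact ⟨B', g, d', i', hp, rfl, .of_isKernel hi' (hi.of_comp wic) (hd.of_isPullback hp)⟩

lemma exists_isPushout (wic : IsWeaklyIdempotentComplete C) {A B X A' : C} {i : A ⟶ B}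
    {d : B ⟶ X} (H : IsStableExact i d) (h : A ⟶ A') :
    ∃ (P : C) (g : B ⟶ P) (i' : A' ⟶ P) (d' : P ⟶ X),
      IsPushout i h g i' ∧ g ≫ d' = d ∧ IsStableExact i' d' := by
  obtain ⟨P, g, i', d', hp, hgd, H'⟩ := (isStableExact_op_iff.2 H).exists_isPullback wic.op h.op
  exact ⟨P.unop, g.unop, i'.unop, d'.unop, hp.unop.flip, congrArg Quiver.Hom.unop hgd,
    isStableExact_op_iff.1 H'⟩

lemma exists_comp (wic : IsWeaklyIdempotentComplete C) {A B X A' Y : C} {i : A ⟶ B} {d : B ⟶ X}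
    {i' : A' ⟶ X} {d' : X ⟶ Y} (H : IsStableExact i d) (H' : IsStableExact i' d') :
    ∃ (K : C) (k : K ⟶ B), IsStableExact k (d ≫ d') := by
  obtain ⟨K, k, p, a, hp, rfl, Ha⟩ := H.exists_isPullback wic i'
  have hlift : IsSemiStableKernel (biprod.lift k p) :=
    H.2.1.of_isPushout (Ha.isCokernel.isPushout_inl_lift k)
  have hcomp : biprod.lift k p ≫ biprod.map (𝟙 B) i' = k ≫ biprod.lift (𝟙 B) d := by
    ext <;> simp [hp.w]
  have hk : IsSemiStableKernel (k ≫ biprod.lift (𝟙 B) d) :=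
    hcomp ▸ hlift.comp (H'.2.1.biprod_map_id B)
  exact ⟨K, k, .of_isKernel (H'.isKernel.fst_of_isPullback hp) (hk.of_comp wic)
    (H.2.2.comp H'.2.2)⟩

end IsStableExact

end HasZeroObject

end Preadditive

theorem stmt16
    (wic : ∀ ⦃X Y : 𝒞⦄ (r : X ⟶ Y) (s : Y ⟶ X), s ≫ r = 𝟙 Y →
      ∃ (K : 𝒞) (k : K ⟶ X) (w : k ≫ r = 0), Nonempty (IsLimit (KernelFork.ofι k w))) :
    IsExactStructure (fun {A B X : 𝒞} (i : A ⟶ B) (d : B ⟶ X) => IsStableExact i d) := by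
  have wic : IsWeaklyIdempotentComplete 𝒞 := wic
  refine ⟨fun _ _ _ _ _ H => H.1, ⟨0, 𝟙 0, isStableExact_id_zero⟩,
    fun _ _ _ _ _ _ _ _ _ H H' => H.exists_comp wic H', fun _ _ _ _ _ _ H h => ?_,
    fun _ _ _ _ _ _ H h => ?_⟩
  · obtain ⟨B', g, d', i', hp, -, H'⟩ := H.exists_isPullback wic h
    exact ⟨B', g, d', hp, _, i', H'⟩
  · obtain ⟨P, g, i', d', hp, -, H'⟩ := H.exists_isPushout wic h
    exact ⟨P, g, i', hp, _, d', H'⟩
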